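/- arXiv:2005.01032 — 2 statements merged into one kernel-verified Lean document; each statement's English description precedes it below -/
import Mathlib

section
/- There exist constants C > 0 such that the following holds: if q(0) ∈ l^∞(ℤ), p(0) = 0, and q(t) is the solution of q̈_k = ω₁²(q_{k+1} - 2q_k + q_{k-1}), then for all t ≥ 0, ‖q(t)‖_∞ ≤ (√(2γω₁ t) + 2)‖q(0)‖_∞, where γ is the unique positive root of (1/γ)e^{1/γ} = 1/e. -/
/-- The operator `(Vq)_k = -ω₁²(q_{k+1} - 2q_k + q_{k-1})` acting on sequences. -/
noncomputable def Vop (ω₁ : ℝ) (q : ℤ → ℝ) : ℤ → ℝ :=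
  fun k => -ω₁^2 * (q (k+1) - 2 * q k + q (k-1))

open MeasureTheory AddCircle

namespace HarmonicChain

lemma Vop_add (ω : ℝ) (f g : ℤ → ℝ) : Vop ω (f + g) = Vop ω f + Vop ω g := by
  funext k
  simp only [Vop, Pi.add_apply]
  ring

lemma Vop_iterate_add (ω : ℝ) (f g : ℤ → ℝ) (k : ℕ) :
    (Vop ω)^[k] (f + g) = (Vop ω)^[k] f + (Vop ω)^[k] g := by
  induction k with
  | zero => rfl
  | succ k ih => simp only [Function.iterate_succ_apply', ih, Vop_add]

lemma abs_Vop_iterate_le (ω : ℝ) {f : ℤ → ℝ} {B : ℝ} (hB : ∀ n, |f n| ≤ B) (k : ℕ) (n : ℤ) :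
    |((Vop ω)^[k] f) n| ≤ (2 * ω) ^ (2 * k) * B := by
  induction k generalizing n with
  | zero => simpa using hB n
  | succ k ih =>
    rw [Function.iterate_succ_apply']
    set g := (Vop ω)^[k] f
    have h : |g (n + 1) - 2 * g n + g (n - 1)| ≤ 4 * ((2 * ω) ^ (2 * k) * B) := by
      have h1 := abs_le.1 (ih (n + 1))
      have h2 := abs_le.1 (ih n)
      have h3 := abs_le.1 (ih (n - 1))
      rw [abs_le]
      constructor <;> linarith
    calc |Vop ω g n| = ω ^ 2 * |g (n + 1) - 2 * g n + g (n - 1)| := by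
          simp only [Vop, abs_mul, abs_neg, abs_of_nonneg (sq_nonneg ω)]
      _ ≤ ω ^ 2 * (4 * ((2 * ω) ^ (2 * k) * B)) := by gcongr
      _ = (2 * ω) ^ (2 * (k + 1)) * B := by ring

/-- Each application of `Vop` spreads the support by one site. -/
lemma Vop_iterate_eq_zero (ω : ℝ) {f : ℤ → ℝ} (k : ℕ) {n : ℤ}
    (hf : ∀ m : ℤ, |m - n| ≤ k → f m = 0) : ((Vop ω)^[k] f) n = 0 := by
  induction k generalizing n with
  | zero => exact hf n (by simp)
  | succ k ih =>
    rw [Function.iterate_succ_apply']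
    have h (j : ℤ) (hj : |j - n| ≤ 1) : ((Vop ω)^[k] f) j = 0 := by
      refine ih fun m hm => hf m ?_
      rw [abs_le] at *
      push_cast
      constructor <;> linarith
    simp [Vop, h n (by simp), h (n + 1) (by simp), h (n - 1) (by simp)]

/-- The dispersion relation of the chain, as a function of the wave number. -/
noncomputable def dispersion (ω : ℝ) (x : UnitAddCircle) : ℝ := ω * ‖1 - fourier 1 x‖

@[fun_prop]
lemma continuous_dispersion (ω : ℝ) : Continuous (dispersion ω) := by
  unfold dispersion
  fun_prop

lemma abs_dispersion_le (ω : ℝ) (x : UnitAddCircle) : |dispersion ω x| ≤ 2 * |ω| := by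
  have h : ‖(1 : ℂ) - fourier 1 x‖ ≤ 2 := by
    refine (norm_sub_le _ _).trans ?_
    rw [fourier_one, Circle.norm_coe, norm_one]
    norm_num
  rw [dispersion, abs_mul, abs_norm, mul_comm]
  gcongr

lemma dispersion_sq (ω : ℝ) (x : UnitAddCircle) :
    ((dispersion ω x ^ 2 : ℝ) : ℂ) = ω ^ 2 * (2 - fourier 1 x - fourier (-1) x) := by
  have h : (fourier 1 x : ℂ) * fourier (-1) x = 1 := by
    rw [← fourier_add]
    simp
  have h2 := Complex.mul_conj' (1 - fourier 1 x : ℂ)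
  rw [map_sub, map_one, ← fourier_neg] at h2
  rw [dispersion, mul_pow]
  push_cast
  rw [← h2]
  linear_combination (ω : ℂ) ^ 2 * h

lemma fourierCoeff_dispersion_sq_mul (ω : ℝ) {g : UnitAddCircle → ℂ} (hg : Continuous g) (i : ℤ) :
    fourierCoeff (fun x => ((dispersion ω x ^ 2 : ℝ) : ℂ) * g x) i =
      -ω ^ 2 * (fourierCoeff g (i + 1) - 2 * fourierCoeff g i + fourierCoeff g (i - 1)) := by
  have hint (j : ℤ) : Integrable (fun x : UnitAddCircle => fourier j x • g x) haarAddCircle :=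
    Continuous.integrable_of_hasCompactSupport (by fun_prop) (HasCompactSupport.of_compactSpace _)
  unfold fourierCoeff
  rw [← integral_const_mul 2, ← integral_sub (hint _) ((hint _).const_mul _)]
  have hadd := integral_add ((hint (-(i + 1))).sub ((hint (-i)).const_mul 2)) (hint (-(i - 1)))
  simp only [Pi.sub_apply] at hadd
  rw [← hadd, ← integral_const_mul]
  congr 1
  funext x
  have h1 : (fourier (-(i + 1)) x : ℂ) = fourier (-i) x * fourier (-1) x := by
    rw [← fourier_add]; congr 2; ring
  have h2 : (fourier (-(i - 1)) x : ℂ) = fourier (-i) x * fourier 1 x := by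
    rw [← fourier_add]; congr 2; ring
  simp only [dispersion_sq, h1, h2]
  simp only [smul_eq_mul]
  ring

lemma fourierCoeff_one (i : ℤ) :
    fourierCoeff (fun _ : UnitAddCircle => (1 : ℂ)) i = if i = 0 then 1 else 0 := by
  have h := fourierCoeff_fourier (T := 1) 0
  have h0 : (fourier 0 : UnitAddCircle → ℂ) = fun _ => 1 := by
    funext x
    exact fourier_zero
  rw [h0] at h
  rw [h, Pi.single_apply]

/-- In Fourier space `Vop` is multiplication by the square of the dispersion relation. -/
lemma Vop_iterate_indicator (ω : ℝ) (f : ℤ → ℝ) (S : Finset ℤ) (k : ℕ) (n : ℤ) :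
    (((Vop ω)^[k] ((S : Set ℤ).indicator f) n : ℝ) : ℂ) =
      ∑ j ∈ S, (f j : ℂ) *
        fourierCoeff (fun x => ((dispersion ω x ^ (2 * k) : ℝ) : ℂ)) (n - j) := by
  induction k generalizing n with
  | zero =>
    simp only [Function.iterate_zero, id_eq, mul_zero, pow_zero, Complex.ofReal_one,
      fourierCoeff_one, sub_eq_zero, mul_ite, mul_one, Finset.sum_ite_eq, Set.indicator_apply,
      Finset.mem_coe]
    split_ifs <;> simp
  | succ k ih =>
    rw [Function.iterate_succ_apply']
    simp only [Vop]
    push_cast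
    rw [ih, ih, ih, Finset.mul_sum, ← Finset.sum_sub_distrib, ← Finset.sum_add_distrib,
      Finset.mul_sum]
    refine Finset.sum_congr rfl fun j _ => ?_
    have h := fourierCoeff_dispersion_sq_mul ω
      (g := fun x => ((dispersion ω x ^ (2 * k) : ℝ) : ℂ)) (by fun_prop) (n - j)
    have e : (fun x => (dispersion ω x : ℂ) ^ (2 * (k + 1))) =
        fun x => ((dispersion ω x ^ 2 : ℝ) : ℂ) * ((dispersion ω x ^ (2 * k) : ℝ) : ℂ) := by
      funext x
      push_cast
      ring
    rw [e, h]
    have e1 : n - j + 1 = n + 1 - j := by ring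
    have e2 : n - j - 1 = n - 1 - j := by ring
    rw [e1, e2]
    push_cast
    ring

/-- The propagator of the chain in Fourier space. -/
noncomputable def propagator (ω t : ℝ) : C(UnitAddCircle, ℂ) where
  toFun x := (Real.cos (t * dispersion ω x) : ℂ)
  continuous_toFun := by fun_prop

lemma hasSum_fourierCoeff_propagator (ω t : ℝ) (i : ℤ) :
    HasSum (fun k : ℕ => (((-1) ^ k * t ^ (2 * k) / (Nat.factorial (2 * k)) : ℝ) : ℂ) *
        fourierCoeff (fun x => ((dispersion ω x ^ (2 * k) : ℝ) : ℂ)) i)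
      (fourierCoeff (propagator ω t) i) := by
  unfold fourierCoeff
  simp_rw [← integral_const_mul]
  have hs := (Real.hasSum_cosh (|t| * (2 * |ω|)))
  refine hasSum_integral_of_dominated_convergence
    (fun k _ => (|t| * (2 * |ω|)) ^ (2 * k) / (Nat.factorial (2 * k)))
    (fun k => Continuous.aestronglyMeasurable (by fun_prop)) (fun k => .of_forall fun x => ?_)
    (.of_forall fun _ => hs.summable) (integrable_const _) (.of_forall fun x => ?_)
  · have h1 : ‖(fourier (-i) x : ℂ)‖ = 1 := by rw [fourier_apply, Circle.norm_coe]
    rw [norm_mul, norm_smul, h1, one_mul, Complex.norm_real, Complex.norm_real, Real.norm_eq_abs,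
      Real.norm_eq_abs, abs_div, abs_mul, abs_pow, abs_pow, abs_pow, abs_neg, abs_one, one_pow,
      one_mul, Nat.abs_cast, div_mul_eq_mul_div, ← mul_pow]
    gcongr
    exact abs_dispersion_le ω x
  · have h := (Complex.hasSum_ofReal.2 (Real.hasSum_cos (t * dispersion ω x))).mul_left
      (fourier (-i) x : ℂ)
    refine HasSum.congr_fun h fun k => ?_
    push_cast
    simp only [smul_eq_mul]
    ring

lemma sum_sq_fourierCoeff_propagator_le (ω t : ℝ) (S : Finset ℤ) :
    ∑ i ∈ S, ‖fourierCoeff (propagator ω t) i‖ ^ 2 ≤ 1 := by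
  have h := hasSum_sq_fourierCoeff (ContinuousMap.toLp (E := ℂ) 2 haarAddCircle ℂ (propagator ω t))
  simp_rw [fourierCoeff_toLp] at h
  refine (sum_le_hasSum S (fun _ _ => by positivity) h).trans ?_
  have hae : (fun x => ‖ContinuousMap.toLp (E := ℂ) 2 haarAddCircle ℂ (propagator ω t) x‖ ^ 2)
      =ᵐ[haarAddCircle] fun x => ‖propagator ω t x‖ ^ 2 := by
    filter_upwards [ContinuousMap.coeFn_toLp (𝕜 := ℂ) (p := 2) haarAddCircle (propagator ω t)]
      with x hx
    rw [hx]
  rw [integral_congr_ae hae]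
  calc ∫ x, ‖propagator ω t x‖ ^ 2 ∂haarAddCircle
      ≤ ∫ _ : UnitAddCircle, (1 : ℝ) ∂haarAddCircle := by
        refine integral_mono
          (Continuous.integrable_of_hasCompactSupport (by fun_prop)
            (HasCompactSupport.of_compactSpace _)) (integrable_const _) fun x => ?_
        change ‖(Real.cos (t * dispersion ω x) : ℂ)‖ ^ 2 ≤ 1
        rw [Complex.norm_real, Real.norm_eq_abs, sq_abs]
        exact Real.cos_sq_le_one _
    _ = 1 := by simp

/-- By unitarity, data supported on `S` grow at most by the factor `√#S`. -/
lemma abs_tsum_indicator_le (ω t : ℝ) {f : ℤ → ℝ} {B : ℝ} (hB : ∀ n, |f n| ≤ B) (S : Finset ℤ)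
    (n : ℤ) :
    |∑' k : ℕ, (-1) ^ k * t ^ (2 * k) / (Nat.factorial (2 * k)) *
      ((Vop ω)^[k] ((S : Set ℤ).indicator f)) n| ≤ √(S.card : ℝ) * B := by
  have hB0 : 0 ≤ B := (abs_nonneg _).trans (hB 0)
  set a : ℤ → ℂ := fourierCoeff (propagator ω t)
  have hsum : HasSum (fun k : ℕ => (((-1) ^ k * t ^ (2 * k) / (Nat.factorial (2 * k)) *
      ((Vop ω)^[k] ((S : Set ℤ).indicator f)) n : ℝ) : ℂ)) (∑ j ∈ S, (f j : ℂ) * a (n - j)) := by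
    have h := hasSum_sum fun j (_ : j ∈ S) =>
      (hasSum_fourierCoeff_propagator ω t (n - j)).mul_left (f j : ℂ)
    refine HasSum.congr_fun h fun k => ?_
    rw [Complex.ofReal_mul, Vop_iterate_indicator, Finset.mul_sum]
    refine Finset.sum_congr rfl fun j _ => ?_
    ring
  have hnorm : ∑ j ∈ S, ‖a (n - j)‖ ≤ √(S.card : ℝ) := by
    refine Real.le_sqrt_of_sq_le (sq_sum_le_card_mul_sum_sq.trans ?_)
    have h := sum_sq_fourierCoeff_propagator_le ω t (S.image (n - ·))
    rw [Finset.sum_image fun i _ j _ hij => by simpa using hij] at h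
    exact mul_le_of_le_one_right (by positivity) h
  rw [← Real.norm_eq_abs, ← Complex.norm_real, Complex.ofReal_tsum, hsum.tsum_eq]
  calc ‖∑ j ∈ S, (f j : ℂ) * a (n - j)‖ ≤ ∑ j ∈ S, ‖(f j : ℂ) * a (n - j)‖ := norm_sum_le _ _
    _ ≤ ∑ j ∈ S, B * ‖a (n - j)‖ := by
        gcongr with j _
        rw [norm_mul, Complex.norm_real]
        gcongr
        exact hB j
    _ = (∑ j ∈ S, ‖a (n - j)‖) * B := by rw [← Finset.mul_sum, mul_comm]
    _ ≤ √(S.card : ℝ) * B := by gcongr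

lemma abs_term_le (ω t : ℝ) {f : ℤ → ℝ} {B : ℝ} (hB : ∀ n, |f n| ≤ B) (k : ℕ) (n : ℤ) :
    |(-1) ^ k * t ^ (2 * k) / (Nat.factorial (2 * k)) * ((Vop ω)^[k] f) n| ≤
      (2 * (ω * t)) ^ (2 * k) / (Nat.factorial (2 * k)) * B := by
  have e : |(-1) ^ k * t ^ (2 * k) / (Nat.factorial (2 * k))| =
      t ^ (2 * k) / (Nat.factorial (2 * k)) := by
    rw [abs_div, abs_mul, abs_pow, abs_neg, abs_one, one_pow, one_mul, Nat.abs_cast,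
      abs_of_nonneg ((even_two_mul k).pow_nonneg t)]
  rw [abs_mul, e]
  calc t ^ (2 * k) / (Nat.factorial (2 * k)) * |((Vop ω)^[k] f) n|
      ≤ t ^ (2 * k) / (Nat.factorial (2 * k)) * ((2 * ω) ^ (2 * k) * B) :=
        mul_le_mul_of_nonneg_left (abs_Vop_iterate_le ω hB k n)
          (div_nonneg ((even_two_mul k).pow_nonneg t) (by positivity))
    _ = _ := by rw [← mul_assoc 2, mul_pow, mul_pow, mul_pow]; ring

lemma summable_term (ω t : ℝ) {f : ℤ → ℝ} {B : ℝ} (hB : ∀ n, |f n| ≤ B) (n : ℤ) :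
    Summable fun k : ℕ =>
      (-1) ^ k * t ^ (2 * k) / (Nat.factorial (2 * k)) * ((Vop ω)^[k] f) n :=
  Summable.of_norm_bounded ((Real.hasSum_cosh (2 * (ω * t))).summable.mul_right B)
    fun k => abs_term_le ω t hB k n

lemma cosh_le_exp {x : ℝ} (hx : 0 ≤ x) : Real.cosh x ≤ Real.exp x := by
  rw [← Real.cosh_add_sinh x]
  linarith [Real.sinh_nonneg_iff.2 hx]

/-- Exponential locality: data vanishing within distance `M` contribute little. -/
lemma abs_tsum_far_le {ω t : ℝ} (hωt : 0 ≤ ω * t) {f : ℤ → ℝ} {B : ℝ} (hB : ∀ n, |f n| ≤ B)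
    (n : ℤ) {M : ℕ} (hM : 0 < M) (hf : ∀ m : ℤ, |m - n| < M → f m = 0) :
    |∑' k : ℕ, (-1) ^ k * t ^ (2 * k) / (Nat.factorial (2 * k)) * ((Vop ω)^[k] f) n| ≤
      (Real.exp (ω * t / M + 1) * (ω * t / M)) ^ (2 * M) * B := by
  have hB0 : 0 ≤ B := (abs_nonneg _).trans (hB 0)
  set s := ω * t
  have hzero : ∑ k ∈ Finset.range M,
      (-1) ^ k * t ^ (2 * k) / (Nat.factorial (2 * k)) * ((Vop ω)^[k] f) n = 0 := by
    refine Finset.sum_eq_zero fun k hk => ?_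
    have hk := Finset.mem_range.1 hk
    rw [Vop_iterate_eq_zero ω k fun m hm => hf m (by omega), mul_zero]
  rw [← (summable_term ω t hB n).sum_add_tsum_nat_add M, hzero, zero_add]
  have hbound := tsum_of_norm_bounded
    ((Real.hasSum_cosh (2 * s)).mul_left ((2 * s) ^ (2 * M) / (Nat.factorial (2 * M)) * B))
    (f := fun k : ℕ => (-1) ^ (k + M) * t ^ (2 * (k + M)) / (Nat.factorial (2 * (k + M))) *
      ((Vop ω)^[k + M] f) n) fun k => by
      refine (abs_term_le ω t hB (k + M) n).trans ?_
      have hfac : ((Nat.factorial (2 * M) : ℝ) * Nat.factorial (2 * k)) ≤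
          Nat.factorial (2 * (k + M)) := by
        have := Nat.le_of_dvd (Nat.factorial_pos _)
          (Nat.factorial_mul_factorial_dvd_factorial_add (2 * M) (2 * k))
        rw [show 2 * (k + M) = 2 * M + 2 * k by ring]
        exact_mod_cast this
      calc (2 * s) ^ (2 * (k + M)) / (Nat.factorial (2 * (k + M))) * B
          ≤ (2 * s) ^ (2 * (k + M)) / ((Nat.factorial (2 * M) : ℝ) * Nat.factorial (2 * k)) * B := by
            gcongr
        _ = _ := by
            rw [show 2 * (k + M) = 2 * M + 2 * k by ring, pow_add]
            field_simp
  refine hbound.trans ?_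
  have hMpos : (0 : ℝ) < M := by exact_mod_cast hM
  have hst : (2 * (M : ℝ)) ^ (2 * M) / (Nat.factorial (2 * M)) ≤ Real.exp (2 * M) :=
    Real.pow_div_factorial_le_exp _ (by positivity) _
  have e1 : (2 * s) ^ (2 * M) = (2 * (M : ℝ)) ^ (2 * M) * (s / M) ^ (2 * M) := by
    rw [← mul_pow]
    congr 1
    field_simp
  have e2 : Real.exp (s / M + 1) ^ (2 * M) = Real.exp (2 * M) * Real.exp (2 * s) := by
    rw [← Real.exp_nat_mul, ← Real.exp_add]
    congr 1
    push_cast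
    field_simp
    ring
  calc (2 * s) ^ (2 * M) / (Nat.factorial (2 * M)) * B * Real.cosh (2 * s)
      = (2 * (M : ℝ)) ^ (2 * M) / (Nat.factorial (2 * M)) * Real.cosh (2 * s) *
          ((s / M) ^ (2 * M) * B) := by rw [e1]; ring
    _ ≤ Real.exp (2 * M) * Real.exp (2 * s) * ((s / M) ^ (2 * M) * B) := by
        gcongr
        exact cosh_le_exp (by positivity)
    _ = _ := by rw [mul_pow, e2]; ring

end HarmonicChain

open HarmonicChain in
theorem stmt10 (ω₁ γ : ℝ) (hω : 0 < ω₁)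
    (hγpos : 0 < γ) (hγeq : (1/γ) * Real.exp (1/γ) = 1 / Real.exp 1)
    (q0 : ℤ → ℝ) (B : ℝ) (hB : ∀ n, |q0 n| ≤ B)
    (q : ℤ → ℝ → ℝ)
    (hsol : ∀ n t, q n t = ∑' k : ℕ,
      (-1)^k * t^(2*k) / (Nat.factorial (2*k)) * ((Vop ω₁)^[k] q0) n) :
    ∀ t ≥ (0:ℝ), ∀ n : ℤ, |q n t| ≤ (Real.sqrt (2*γ*ω₁*t) + 2) * B := by
  intro t ht n
  have hB0 : 0 ≤ B := (abs_nonneg _).trans (hB 0)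
  have hs : 0 ≤ ω₁ * t := by positivity
  set N := ⌊γ * (ω₁ * t)⌋₊
  have hN : (N : ℝ) ≤ γ * (ω₁ * t) := Nat.floor_le (by positivity)
  have hN1 : γ * (ω₁ * t) < N + 1 := Nat.lt_floor_add_one _
  set S : Finset ℤ := Finset.Icc (n - N) (n + N)
  set near := (S : Set ℤ).indicator q0
  set far := (S : Set ℤ)ᶜ.indicator q0
  have hsplit : q0 = near + far := (Set.indicator_self_add_compl _ _).symm
  have hind (A : Set ℤ) (m : ℤ) : |A.indicator q0 m| ≤ B :=
    (norm_indicator_le_norm_self q0 m).trans (hB m)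
  have hq : q n t =
      (∑' k : ℕ, (-1)^k * t^(2*k) / (Nat.factorial (2*k)) * ((Vop ω₁)^[k] near) n) +
      ∑' k : ℕ, (-1)^k * t^(2*k) / (Nat.factorial (2*k)) * ((Vop ω₁)^[k] far) n := by
    rw [hsol, ← (summable_term ω₁ t (hind _) n).tsum_add (summable_term ω₁ t (hind _) n)]
    refine tsum_congr fun k => ?_
    conv_lhs => rw [hsplit, Vop_iterate_add, Pi.add_apply, mul_add]
  have hnear := abs_tsum_indicator_le ω₁ t hB S n
  have hcard : √(S.card : ℝ) ≤ √(2 * γ * ω₁ * t) + 1 := by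
    have hc : S.card = 2 * N + 1 := by
      rw [Int.card_Icc]
      omega
    rw [hc]
    refine Real.sqrt_le_iff.2 ⟨by positivity, ?_⟩
    have := Real.sq_sqrt (show 0 ≤ 2 * γ * ω₁ * t by positivity)
    have := Real.sqrt_nonneg (2 * γ * ω₁ * t)
    push_cast
    nlinarith
  have hfar := abs_tsum_far_le hs (hind (S : Set ℤ)ᶜ) n N.succ_pos fun m hm => by
    refine Set.indicator_of_notMem ?_ _
    rw [abs_lt] at hm
    simp only [Set.mem_compl_iff, not_not, Finset.mem_coe, S, Finset.mem_Icc]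
    omega
  have hsmall : (Real.exp (ω₁ * t / (N.succ : ℕ) + 1) * (ω₁ * t / (N.succ : ℕ))) ^ (2 * N.succ)
      ≤ 1 := by
    refine pow_le_one₀ (by positivity) ?_
    have hα : ω₁ * t / (N.succ : ℕ) ≤ 1 / γ := by
      rw [div_le_div_iff₀ (by positivity) hγpos]
      push_cast
      linarith
    calc _ ≤ Real.exp (1 / γ + 1) * (1 / γ) := by gcongr
      _ = Real.exp 1 * ((1 / γ) * Real.exp (1 / γ)) := by rw [Real.exp_add]; ring
      _ = 1 := by rw [hγeq]; field_simp
  rw [hq]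
  calc _ ≤ _ := abs_add_le _ _
    _ ≤ √(S.card : ℝ) * B + _ * B := add_le_add hnear hfar
    _ ≤ (√(2 * γ * ω₁ * t) + 1) * B + 1 * B := by gcongr
    _ = (√(2 * γ * ω₁ * t) + 2) * B := by ring
end

section
/- For all n ∈ ℤ and t ∈ ℝ with n ≠ 0 and t ≠ 0, |J_n(t)| ≤ min(|n|^{-1/3}, |t|^{-1/3}). -/
open MeasureTheory

/-- Bessel function of the first kind of integer order. -/
noncomputable def besselJ (n : ℤ) (t : ℝ) : ℝ :=
  (1 / Real.pi) * ∫ φ in (0:ℝ)..Real.pi, Real.cos (t * Real.sin φ - n * φ)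

namespace LandauBessel

open Set Filter Topology Real

/-! ### Calculus on half-lines -/

lemma monotoneOn_of_hasDerivAt_nonneg {f f' : ℝ → ℝ} {D : Set ℝ} (hD : Convex ℝ D)
    (hf : ∀ x, HasDerivAt f (f' x) x) (h : ∀ x ∈ D, 0 ≤ f' x) : MonotoneOn f D :=
  monotoneOn_of_hasDerivWithinAt_nonneg hD (fun x _ => (hf x).continuousAt.continuousWithinAt)
    (fun x _ => (hf x).hasDerivWithinAt) (fun x hx => h x (interior_subset hx))

lemma antitoneOn_of_hasDerivAt_nonpos {f f' : ℝ → ℝ} {D : Set ℝ} (hD : Convex ℝ D)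
    (hf : ∀ x, HasDerivAt f (f' x) x) (h : ∀ x ∈ D, f' x ≤ 0) : AntitoneOn f D :=
  antitoneOn_of_hasDerivWithinAt_nonpos hD (fun x _ => (hf x).continuousAt.continuousWithinAt)
    (fun x _ => (hf x).hasDerivWithinAt) (fun x hx => h x (interior_subset hx))

lemma nonneg_of_hasDerivAt_nonneg_of_tendsto_atBot {f f' : ℝ → ℝ} {a : ℝ}
    (hf : ∀ x, HasDerivAt f (f' x) x) (h : ∀ x ≤ a, 0 ≤ f' x)
    (hl : Tendsto f atBot (𝓝 0)) {x : ℝ} (hx : x ≤ a) : 0 ≤ f x := by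
  have hm := monotoneOn_of_hasDerivAt_nonneg (convex_Iic a) hf (fun x hx => h x hx)
  refine le_of_tendsto hl ?_
  filter_upwards [eventually_le_atBot x] with s hs
  exact hm (hs.trans hx) hx hs

/-- A continuous function starting nonnegative either stays so or has a first sign change. -/
lemma nonneg_or_exists_first_zero {h : ℝ → ℝ} (hc : Continuous h) {T : ℝ} (h0 : 0 ≤ h 0) :
    (∀ s ∈ Icc 0 T, 0 ≤ h s) ∨ ∃ c ∈ Icc 0 T, h c = 0 ∧ ∀ s ∈ Icc 0 c, 0 ≤ h s := by
  by_contra! hcon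
  obtain ⟨⟨b, hb, hbneg⟩, hno⟩ := hcon
  set S : Set ℝ := {s | s ∈ Icc 0 b ∧ h s < 0}
  have hbS : b ∈ S := ⟨⟨hb.1, le_rfl⟩, hbneg⟩
  have hbdd : BddBelow S := ⟨0, fun s hs => hs.1.1⟩
  set c := sInf S
  have hc0 : 0 ≤ c := le_csInf ⟨b, hbS⟩ fun s hs => hs.1.1
  have hcb : c ≤ b := csInf_le hbdd hbS
  have hpre : ∀ s, 0 ≤ s → s < c → 0 ≤ h s := by
    intro s hs hsc
    by_contra! hneg
    exact absurd (csInf_le hbdd (show s ∈ S from ⟨⟨hs, hsc.le.trans hcb⟩, hneg⟩)) (not_le.2 hsc)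
  have hle : h c ≤ 0 := by
    have hcl : c ∈ closure S := csInf_mem_closure ⟨b, hbS⟩ hbdd
    have : closure S ⊆ {s | h s ≤ 0} :=
      closure_minimal (fun s hs => hs.2.le) (isClosed_le hc continuous_const)
    exact this hcl
  have hge : 0 ≤ h c := by
    rcases hc0.eq_or_lt with h0c | h0c
    · rwa [← h0c]
    · have hcl : c ∈ closure (Ioo 0 c) := by
        rw [closure_Ioo h0c.ne]; exact ⟨hc0, le_rfl⟩
      have : closure (Ioo 0 c) ⊆ {s | 0 ≤ h s} :=
        closure_minimal (fun s hs => hpre s hs.1.le hs.2) (isClosed_le continuous_const hc)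
      exact this hcl
  obtain ⟨s, hs, hsneg⟩ := hno c ⟨hc0, hcb.trans hb.2⟩ (le_antisymm hle hge)
  rcases hs.2.eq_or_lt with rfl | hlt
  · linarith
  · linarith [hpre s hs.1 hlt]

/-! ### Bessel's equation in the logarithmic variable -/

/-- `v` solves `v'' = ν² (1 - e^{2τ}) v`, with derivative `v₁`, and is recessive at `-∞`;
this is Bessel's equation of order `ν` for the function `v (log (t / ν))`. -/
structure IsLogBessel (ν : ℝ) (v v₁ : ℝ → ℝ) : Prop where
  hasDerivAt : ∀ τ, HasDerivAt v (v₁ τ) τ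
  hasDerivAt' : ∀ τ, HasDerivAt v₁ (ν ^ 2 * (1 - exp (2 * τ)) * v τ) τ
  tendsto : Tendsto v atBot (𝓝 0)
  tendsto' : Tendsto v₁ atBot (𝓝 0)
  pos : 0 < v 0

lemma hasDerivAt_exp_two_mul (τ : ℝ) : HasDerivAt (fun τ : ℝ => exp (2 * τ)) (2 * exp (2 * τ)) τ := by
  have := ((hasDerivAt_id τ).const_mul 2).exp
  simpa [mul_comm] using this

namespace IsLogBessel

variable {ν ω : ℝ} {v v₁ : ℝ → ℝ}

lemma mul_deriv_nonneg (h : IsLogBessel ν v v₁) {τ : ℝ} (hτ : τ ≤ 0) : 0 ≤ v τ * v₁ τ := by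
  refine nonneg_of_hasDerivAt_nonneg_of_tendsto_atBot (a := 0)
    (fun x => (h.hasDerivAt x).mul (h.hasDerivAt' x)) (fun x hx => ?_)
    (by have := h.tendsto.mul h.tendsto'; rwa [mul_zero] at this) hτ
  have : exp (2 * x) ≤ 1 := by rw [exp_le_one_iff]; linarith
  have h1 : 0 ≤ ν ^ 2 * (1 - exp (2 * x)) := mul_nonneg (sq_nonneg _) (by linarith)
  nlinarith [mul_nonneg h1 (sq_nonneg (v x)), sq_nonneg (v₁ x)]

lemma sq_monotoneOn (h : IsLogBessel ν v v₁) : MonotoneOn (fun τ => v τ ^ 2) (Iic 0) := by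
  refine monotoneOn_of_hasDerivAt_nonneg (convex_Iic 0)
    (fun x => (h.hasDerivAt x).pow 2) (fun x hx => ?_)
  have := h.mul_deriv_nonneg hx
  simp; nlinarith

lemma abs_le (h : IsLogBessel ν v v₁) {τ : ℝ} (hτ : τ ≤ 0) : |v τ| ≤ v 0 := by
  have := h.sq_monotoneOn (show τ ∈ Iic (0:ℝ) from hτ) (mem_Iic.2 le_rfl) hτ
  exact abs_le_of_sq_le_sq this h.pos.le

lemma continuous (h : IsLogBessel ν v v₁) : Continuous v :=
  continuous_iff_continuousAt.2 fun x => (h.hasDerivAt x).continuousAt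

lemma continuous' (h : IsLogBessel ν v v₁) : Continuous v₁ :=
  continuous_iff_continuousAt.2 fun x => (h.hasDerivAt' x).continuousAt

lemma nonneg (h : IsLogBessel ν v v₁) {τ : ℝ} (hτ : τ ≤ 0) : 0 ≤ v τ := by
  by_contra! hneg
  obtain ⟨z, hz, hvz⟩ := intermediate_value_Icc hτ h.continuous.continuousOn ⟨hneg.le, h.pos.le⟩
  have := h.sq_monotoneOn (show τ ∈ Iic (0:ℝ) from hτ) (show z ∈ Iic 0 from hz.2) hz.1
  simp only [hvz] at this
  nlinarith

lemma deriv_zero_nonneg (h : IsLogBessel ν v v₁) : 0 ≤ v₁ 0 :=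
  nonneg_of_mul_nonneg_right (h.mul_deriv_nonneg le_rfl) h.pos

/-- Riccati bound: `ω + ω² (1 - e^{2τ}) / 2` dominates the logarithmic derivative. -/
lemma deriv_le (h : IsLogBessel ν v v₁) (hω : 0 ≤ ω) (hων : ω ^ 3 + ω ^ 2 = ν ^ 2) {T : ℝ}
    (hT : ∀ τ ≤ T, 0 ≤ v τ) {τ : ℝ} (hτ : τ ≤ T) :
    v₁ τ ≤ (ω + ω ^ 2 / 2 * (1 - exp (2 * τ))) * v τ := by
  set W : ℝ → ℝ := fun τ => ω + ω ^ 2 / 2 * (1 - exp (2 * τ)) with hW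
  set φ : ℝ → ℝ := fun τ => exp ((ω + ω ^ 2 / 2) * τ - ω ^ 2 / 4 * exp (2 * τ)) with hφ
  have hWd : ∀ x, HasDerivAt W (-(ω ^ 2 * exp (2 * x))) x := fun x => by
    have := (((hasDerivAt_exp_two_mul x).const_sub 1).const_mul (ω ^ 2 / 2)).const_add ω
    exact this.congr_deriv (by ring)
  have hφd : ∀ x, HasDerivAt φ (φ x * W x) x := fun x => by
    have := (((hasDerivAt_id x).const_mul (ω + ω ^ 2 / 2)).sub
      ((hasDerivAt_exp_two_mul x).const_mul (ω ^ 2 / 4))).exp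
    exact this.congr_deriv (by simp only [hφ, hW, Pi.sub_apply, id]; ring)
  have hd : ∀ x, HasDerivAt (fun x => (W x * v x - v₁ x) * φ x)
      ((ω ^ 2 / 2 * (1 - exp (2 * x))) ^ 2 * v x * φ x) x := fun x => by
    have := ((((hWd x).mul (h.hasDerivAt x)).sub (h.hasDerivAt' x)).mul (hφd x))
    refine this.congr_deriv ?_
    simp only [hW, ← hων, Pi.mul_apply, Pi.sub_apply]
    ring
  have hexp : Tendsto (fun x : ℝ => exp (2 * x)) atBot (𝓝 0) :=
    tendsto_exp_atBot.comp (tendsto_id.const_mul_atBot two_pos)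
  have hWl : Tendsto W atBot (𝓝 (ω + ω ^ 2 / 2 * (1 - 0))) :=
    ((hexp.const_sub 1).const_mul _).const_add _
  have hφl : Tendsto (fun x => (W x * v x - v₁ x) * φ x) atBot (𝓝 0) := by
    have h1 : Tendsto (fun x => W x * v x - v₁ x) atBot (𝓝 0) := by
      simpa using (hWl.mul h.tendsto).sub h.tendsto'
    refine squeeze_zero_norm' ?_ (by simpa using h1.norm)
    filter_upwards [eventually_le_atBot 0] with x hx
    have : φ x ≤ 1 := by
      rw [hφ, exp_le_one_iff]
      have h1 : (ω + ω ^ 2 / 2) * x ≤ 0 := mul_nonpos_of_nonneg_of_nonpos (by positivity) hx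
      have h2 : 0 ≤ ω ^ 2 / 4 * exp (2 * x) := by positivity
      linarith
    rw [norm_mul]
    have h3 : ‖φ x‖ ≤ 1 := by rwa [Real.norm_of_nonneg (exp_pos _).le]
    exact mul_le_of_le_one_right (norm_nonneg _) h3
  have key := nonneg_of_hasDerivAt_nonneg_of_tendsto_atBot hd (a := T)
    (fun x hx => mul_nonneg (mul_nonneg (sq_nonneg _) (hT x hx)) (exp_pos _).le) hφl hτ
  have := nonneg_of_mul_nonneg_left key (exp_pos _)
  simp only [hW] at this
  linarith

lemma le_exp_mul (h : IsLogBessel ν v v₁) (hω : 0 ≤ ω) (hων : ω ^ 3 + ω ^ 2 = ν ^ 2) {T : ℝ}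
    (hT0 : 0 ≤ T) (hT : ∀ τ ∈ Icc 0 T, 0 ≤ v τ) :
    v T ≤ v 0 * exp ((ω + ω ^ 2 / 2) * T - ω ^ 2 / 4 * (exp (2 * T) - 1)) := by
  have hT' : ∀ τ ≤ T, 0 ≤ v τ := fun τ hτ =>
    (le_total τ 0).elim h.nonneg fun h0 => hT τ ⟨h0, hτ⟩
  set ψ : ℝ → ℝ := fun τ => exp (ω ^ 2 / 4 * exp (2 * τ) - (ω + ω ^ 2 / 2) * τ) with hψ
  have hψd : ∀ x, HasDerivAt ψ (-(ψ x * (ω + ω ^ 2 / 2 * (1 - exp (2 * x))))) x := fun x => by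
    have := (((hasDerivAt_exp_two_mul x).const_mul (ω ^ 2 / 4)).sub
      ((hasDerivAt_id x).const_mul (ω + ω ^ 2 / 2))).exp
    exact this.congr_deriv (by simp only [hψ, Pi.sub_apply, id]; ring)
  have hanti := antitoneOn_of_hasDerivAt_nonpos (convex_Iic T)
    (fun x => (h.hasDerivAt x).mul (hψd x)) (fun x hx => by
      have := h.deriv_le hω hων hT' hx
      have hp : 0 < ψ x := exp_pos _
      nlinarith)
  have := hanti (show (0:ℝ) ∈ Iic T from hT0) (mem_Iic.2 le_rfl) hT0
  simp only [hψ, Pi.mul_apply] at this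
  have hpos := exp_pos (ω ^ 2 / 4 * exp (2 * T) - (ω + ω ^ 2 / 2) * T)
  rw [← mul_le_mul_iff_left₀ hpos, mul_assoc, ← exp_add]
  convert this using 3
  simp; ring

/-- The Sonin energy of `e^{τ/3} v` decreases on `[0, ∞)`. -/
lemma energy_antitoneOn (h : IsLogBessel ν v v₁) (hν : 1 ≤ ν) :
    AntitoneOn (fun τ => (exp (τ / 3) * v τ) ^ 2 +
      (exp (τ / 3) * (v₁ τ + v τ / 3)) ^ 2 / (ν ^ 2 * (exp (2 * τ) - 1) + 1 / 9)) (Ici 0) := by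
  have he : ∀ x, HasDerivAt (fun x : ℝ => exp (x / 3)) (exp (x / 3) / 3) x := fun x => by
    have := ((hasDerivAt_id x).div_const 3).exp
    exact this.congr_deriv (by simp only [id]; ring)
  have hp : ∀ x ∈ Ici (0:ℝ), 0 < ν ^ 2 * (exp (2 * x) - 1) + 1 / 9 := fun x hx => by
    have : 1 ≤ exp (2 * x) := by rw [one_le_exp_iff]; linarith [mem_Ici.1 hx]
    have := mul_nonneg (sq_nonneg ν) (sub_nonneg.2 this)
    linarith
  have hd : ∀ x ∈ Ici (0:ℝ), HasDerivAt (fun τ => (exp (τ / 3) * v τ) ^ 2 +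
      (exp (τ / 3) * (v₁ τ + v τ / 3)) ^ 2 / (ν ^ 2 * (exp (2 * τ) - 1) + 1 / 9))
      ((exp (x / 3) * (v₁ x + v x / 3)) ^ 2 *
        (4 / 3 * (ν ^ 2 * (exp (2 * x) - 1) + 1 / 9) - 2 * ν ^ 2 * exp (2 * x)) /
        (ν ^ 2 * (exp (2 * x) - 1) + 1 / 9) ^ 2) x := fun x hx => by
    have hp' := (hp x hx).ne'
    have h1 := ((he x).mul (h.hasDerivAt x)).pow 2
    have h2 := ((he x).mul ((h.hasDerivAt' x).add ((h.hasDerivAt x).div_const 3))).pow 2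
    have h3 := (((hasDerivAt_exp_two_mul x).sub_const 1).const_mul (ν ^ 2)).add_const (1 / 9)
    refine (h1.add (h2.div h3 hp')).congr_deriv ?_
    simp only [Pi.mul_apply, Pi.add_apply, Pi.pow_apply]
    have h4 : ν ^ 2 * (1 - exp (2 * x)) = 1 / 9 - (ν ^ 2 * (exp (2 * x) - 1) + 1 / 9) := by ring
    rw [h4]
    generalize ν ^ 2 * (exp (2 * x) - 1) + 1 / 9 = p at hp' ⊢
    field_simp
    ring
  refine antitoneOn_of_hasDerivWithinAt_nonpos (convex_Ici 0)
    (fun x hx => (hd x hx).continuousAt.continuousWithinAt)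
    (fun x hx => (hd x (interior_subset hx)).hasDerivWithinAt) (fun x hx => ?_)
  have hx0 := interior_subset hx
  have : 1 ≤ exp (2 * x) := by rw [one_le_exp_iff]; linarith [mem_Ici.1 hx0]
  refine div_nonpos_of_nonpos_of_nonneg (mul_nonpos_of_nonneg_of_nonpos (sq_nonneg _) ?_)
    (sq_nonneg _)
  nlinarith

/-- Uniform bound past the turning point, in terms of the value there. -/
lemma exp_mul_abs_le (h : IsLogBessel ν v v₁) (hν : 1 ≤ ν) (hω : 0 ≤ ω)
    (hων : ω ^ 3 + ω ^ 2 = ν ^ 2) {K : ℝ}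
    (hK : ∀ τ : ℝ, 0 ≤ τ → (ω + ω ^ 2 / 2 + 1 / 3) * τ - ω ^ 2 / 4 * (exp (2 * τ) - 1) ≤ K)
    {T : ℝ} (hT : 0 ≤ T) : exp (T / 3) * |v T| ≤ v 0 * exp K := by
  set g : ℝ → ℝ := fun τ => exp (τ / 3) * v τ with hg
  set g₁ : ℝ → ℝ := fun τ => exp (τ / 3) * (v₁ τ + v τ / 3) with hg₁
  have hgd : ∀ x, HasDerivAt g (g₁ x) x := fun x => by
    have := (((hasDerivAt_id x).div_const 3).exp).mul (h.hasDerivAt x)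
    exact this.congr_deriv (by simp only [hg₁, id]; ring)
  have hg₁c : Continuous g₁ := by
    have := h.continuous; have := h.continuous'; fun_prop
  have before : ∀ c, 0 ≤ c → (∀ s ∈ Icc 0 c, 0 ≤ g₁ s) → 0 ≤ g c ∧ g c ≤ v 0 * exp K := by
    intro c hc hs
    have hm := monotoneOn_of_hasDerivAt_nonneg (convex_Icc 0 c) hgd hs
    have hv : ∀ s ∈ Icc 0 c, 0 ≤ v s := fun s hs => by
      have h1 : g 0 ≤ g s := hm ⟨le_rfl, hc⟩ hs hs.1
      have h2 : 0 < g 0 := mul_pos (exp_pos _) h.pos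
      exact (pos_of_mul_pos_right (h2.trans_le h1) (exp_pos _).le).le
    refine ⟨mul_nonneg (exp_pos _).le (hv c ⟨hc, le_rfl⟩), ?_⟩
    calc g c ≤ exp (c / 3) *
          (v 0 * exp ((ω + ω ^ 2 / 2) * c - ω ^ 2 / 4 * (exp (2 * c) - 1))) := by
          exact mul_le_mul_of_nonneg_left (h.le_exp_mul hω hων hc hv) (exp_pos _).le
      _ = v 0 * exp ((ω + ω ^ 2 / 2 + 1 / 3) * c - ω ^ 2 / 4 * (exp (2 * c) - 1)) := by
          rw [mul_left_comm, ← exp_add]; congr 2; ring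
      _ ≤ v 0 * exp K := by
          have := h.pos
          gcongr
          exact hK c hc
  have hgT : exp (T / 3) * |v T| = |g T| := by rw [abs_mul, abs_of_pos (exp_pos _)]
  rw [hgT]
  have h0 : 0 ≤ g₁ 0 := by
    have := h.deriv_zero_nonneg; have := h.pos
    simp only [hg₁]; positivity
  rcases nonneg_or_exists_first_zero hg₁c (T := T) h0 with hs | ⟨c, hc, hc0, hs⟩
  · obtain ⟨h1, h2⟩ := before T hT hs
    rwa [abs_of_nonneg h1]
  · obtain ⟨h1, h2⟩ := before c hc.1 hs
    have hE := h.energy_antitoneOn hν (show c ∈ Ici (0:ℝ) from hc.1)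
      (show T ∈ Ici (0:ℝ) from hT) hc.2
    change g T ^ 2 + g₁ T ^ 2 / _ ≤ g c ^ 2 + g₁ c ^ 2 / _ at hE
    have : 1 ≤ exp (2 * T) := by rw [one_le_exp_iff]; linarith
    have hpT : 0 ≤ ν ^ 2 * (exp (2 * T) - 1) + 1 / 9 := by
      have := mul_nonneg (sq_nonneg ν) (sub_nonneg.2 this)
      linarith
    have h3 : 0 ≤ g₁ T ^ 2 / (ν ^ 2 * (exp (2 * T) - 1) + 1 / 9) := by positivity
    rw [hc0] at hE
    have : g T ^ 2 ≤ g c ^ 2 := by simpa using (le_add_of_nonneg_right h3).trans hE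
    exact (abs_le_of_sq_le_sq this h1).trans h2

end IsLogBessel
/-! ### Bessel's equation for the integral -/

lemma hasDerivAt_integral_zero_pi {F F' : ℝ → ℝ → ℝ} (hF : ∀ t, Continuous (F t))
    (hF' : ∀ t, Continuous (F' t)) (hb : ∀ t φ, |F' t φ| ≤ 1)
    (hd : ∀ t φ, HasDerivAt (fun t => F t φ) (F' t φ) t) (t : ℝ) :
    HasDerivAt (fun t => ∫ φ in (0:ℝ)..π, F t φ) (∫ φ in (0:ℝ)..π, F' t φ) t :=
  (intervalIntegral.hasDerivAt_integral_of_dominated_loc_of_deriv_le (bound := fun _ => 1)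
    univ_mem (.of_forall fun s => (hF s).aestronglyMeasurable) ((hF t).intervalIntegrable _ _)
    (hF' t).aestronglyMeasurable (.of_forall fun φ _ s _ => hb s φ) intervalIntegrable_const
    (.of_forall fun φ _ s _ => hd s φ)).2

/-- The first derivative of `besselJ n`. -/
noncomputable def besselJDeriv (n : ℤ) (t : ℝ) : ℝ :=
  (1 / π) * ∫ φ in (0:ℝ)..π, -(sin φ * sin (t * sin φ - n * φ))

/-- The second derivative of `besselJ n`. -/
noncomputable def besselJDeriv₂ (n : ℤ) (t : ℝ) : ℝ :=
  (1 / π) * ∫ φ in (0:ℝ)..π, -(sin φ ^ 2 * cos (t * sin φ - n * φ))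

lemma hasDerivAt_phase (n : ℤ) (t φ : ℝ) :
    HasDerivAt (fun t : ℝ => t * sin φ - n * φ) (sin φ) t := by
  simpa using ((hasDerivAt_id t).mul_const (sin φ)).sub_const ((n : ℝ) * φ)

lemma hasDerivAt_besselJ (n : ℤ) (t : ℝ) : HasDerivAt (besselJ n) (besselJDeriv n t) t := by
  refine (hasDerivAt_integral_zero_pi (F := fun t φ => cos (t * sin φ - n * φ))
    (F' := fun t φ => -(sin φ * sin (t * sin φ - n * φ))) (fun t => by fun_prop)
    (fun t => by fun_prop) (fun t φ => ?_) (fun t φ => ?_) t).const_mul _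
  · rw [abs_neg, abs_mul]
    exact mul_le_one₀ (abs_sin_le_one _) (abs_nonneg _) (abs_sin_le_one _)
  · exact (hasDerivAt_phase n t φ).cos.congr_deriv (by ring)

lemma hasDerivAt_besselJDeriv (n : ℤ) (t : ℝ) :
    HasDerivAt (besselJDeriv n) (besselJDeriv₂ n t) t := by
  refine (hasDerivAt_integral_zero_pi (F := fun t φ => -(sin φ * sin (t * sin φ - n * φ)))
    (F' := fun t φ => -(sin φ ^ 2 * cos (t * sin φ - n * φ))) (fun t => by fun_prop)
    (fun t => by fun_prop) (fun t φ => ?_) (fun t φ => ?_) t).const_mul _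
  · rw [abs_neg, abs_mul, abs_pow]
    exact mul_le_one₀ (pow_le_one₀ (abs_nonneg _) (abs_sin_le_one _)) (abs_nonneg _)
      (abs_cos_le_one _)
  · exact (((hasDerivAt_phase n t φ).sin).const_mul (sin φ)).neg.congr_deriv (by ring)

lemma besselJ_equation (n : ℤ) (t : ℝ) :
    t ^ 2 * besselJDeriv₂ n t + t * besselJDeriv n t + (t ^ 2 - n ^ 2) * besselJ n t = 0 := by
  have hd : ∀ φ ∈ uIcc (0:ℝ) π, HasDerivAt
      (fun φ => (t * cos φ + n) * sin (t * sin φ - n * φ))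
      (t ^ 2 * -(sin φ ^ 2 * cos (t * sin φ - n * φ)) +
        t * -(sin φ * sin (t * sin φ - n * φ)) +
        (t ^ 2 - n ^ 2) * cos (t * sin φ - n * φ)) φ := fun φ _ => by
    have h1 : HasDerivAt (fun φ : ℝ => t * sin φ - n * φ) (t * cos φ - n) φ :=
      (((hasDerivAt_sin φ).const_mul t).sub ((hasDerivAt_id φ).const_mul (n : ℝ))).congr_deriv
        (by ring)
    have h2 := (((hasDerivAt_cos φ).const_mul t).add_const (n : ℝ)).mul h1.sin
    refine h2.congr_deriv ?_
    linear_combination (t ^ 2 * cos (t * sin φ - n * φ)) * sin_sq_add_cos_sq φ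
  have hint := intervalIntegral.integral_eq_sub_of_hasDerivAt hd
    (Continuous.intervalIntegrable (by fun_prop) _ _)
  rw [intervalIntegral.integral_add (Continuous.intervalIntegrable (by fun_prop) _ _)
    (Continuous.intervalIntegrable (by fun_prop) _ _),
    intervalIntegral.integral_add (Continuous.intervalIntegrable (by fun_prop) _ _)
    (Continuous.intervalIntegrable (by fun_prop) _ _),
    intervalIntegral.integral_const_mul, intervalIntegral.integral_const_mul,
    intervalIntegral.integral_const_mul] at hint
  have hz : sin (t * sin π - n * π) = 0 := by
    rw [sin_pi, mul_zero, zero_sub, sin_neg, sin_int_mul_pi, neg_zero]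
  simp only [hz, sin_zero, mul_zero, sub_zero, cos_zero] at hint
  simp only [besselJ, besselJDeriv, besselJDeriv₂]
  linear_combination (1 / π) * hint

lemma besselJ_zero_right {n : ℤ} (hn : n ≠ 0) : besselJ n 0 = 0 := by
  have hn' : (n : ℝ) ≠ 0 := Int.cast_ne_zero.2 hn
  have : ∫ φ in (0:ℝ)..π, cos ((n : ℝ) * φ) = 0 := by
    rw [intervalIntegral.integral_comp_mul_left (fun x => cos x) hn']
    simp [sin_int_mul_pi]
  simp [besselJ, this]

lemma isLogBessel_besselJ {n : ℤ} (hn : 1 ≤ n) (hpos : 0 < besselJ n n) :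
    IsLogBessel n (fun τ => besselJ n (n * exp τ))
      (fun τ => n * exp τ * besselJDeriv n (n * exp τ)) := by
  have hx : ∀ τ, HasDerivAt (fun τ : ℝ => (n : ℝ) * exp τ) (n * exp τ) τ := fun τ =>
    (hasDerivAt_exp τ).const_mul _
  have hx0 : Tendsto (fun τ : ℝ => (n : ℝ) * exp τ) atBot (𝓝 0) := by
    simpa using tendsto_exp_atBot.const_mul (n : ℝ)
  refine ⟨fun τ => ?_, fun τ => ?_, ?_, ?_, by simpa using hpos⟩
  · exact ((hasDerivAt_besselJ n (n * exp τ)).comp τ (hx τ)).congr_deriv (mul_comm _ _)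
  · have := (hx τ).mul ((hasDerivAt_besselJDeriv n (n * exp τ)).comp τ (hx τ))
    refine this.congr_deriv ?_
    rw [two_mul, exp_add]
    simp only [Function.comp]
    linear_combination besselJ_equation n (n * exp τ)
  · have := ((hasDerivAt_besselJ n 0).continuousAt.tendsto).comp hx0
    rwa [besselJ_zero_right (by omega)] at this
  · have := hx0.mul (((hasDerivAt_besselJDeriv n 0).continuousAt.tendsto).comp hx0)
    simpa using this

lemma abs_besselJ_abs (n : ℤ) (t : ℝ) : |besselJ n t| = |besselJ (|n|) (|t|)| := by
  have hneg : ∀ (n : ℤ) (t : ℝ), besselJ (-n) (-t) = besselJ n t := fun n t => by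
    simp only [besselJ]
    congr 2
    ext φ
    rw [← cos_neg]; congr 1; push_cast; ring
  have hrefl : ∀ (n : ℤ) (t : ℝ), |besselJ (-n) t| = |besselJ n t| := fun n t => by
    have h1 : ∫ φ in (0:ℝ)..π, cos (t * sin φ - n * φ) =
        cos (n * π) * ∫ φ in (0:ℝ)..π, cos (t * sin φ - (-n : ℤ) * φ) := by
      have := intervalIntegral.integral_comp_sub_left (a := 0) (b := π)
        (fun φ => cos (t * sin φ - n * φ)) π
      rw [sub_self, sub_zero] at this
      rw [← this, ← intervalIntegral.integral_const_mul]
      congr 1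
      ext φ
      have h2 : t * sin φ - n * (π - φ) = (t * sin φ - (-n : ℤ) * φ) - n * π := by
        push_cast; ring
      rw [sin_pi_sub, h2, cos_sub, sin_int_mul_pi]
      ring
    simp only [besselJ]
    rw [h1, abs_mul, abs_mul, abs_mul, abs_cos_int_mul_pi, one_mul]
  rcases abs_choice n with h | h <;> rcases abs_choice t with h' | h' <;> rw [h, h']
  · rw [← hrefl n (-t), hneg]
  · rw [hrefl]
  · rw [hneg]

/-! ### The value at the turning point -/

lemma cos_le_quartic {x : ℝ} (hx : 0 ≤ x) : cos x ≤ 1 - x ^ 2 / 2 + x ^ 4 / 24 := by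
  have hd : ∀ x, HasDerivAt (fun x : ℝ => 1 - x ^ 2 / 2 + x ^ 4 / 24 - cos x)
      (sin x - (x - x ^ 3 / 6)) x := fun x =>
    (((((hasDerivAt_pow 2 x).div_const 2).const_sub 1).add
      ((hasDerivAt_pow 4 x).div_const 24)).sub (hasDerivAt_cos x)).congr_deriv (by
        push_cast; ring)
  have := monotoneOn_of_hasDerivAt_nonneg (convex_Ici 0) hd
    (fun y hy => by linarith [sin_ge_sub_cube (mem_Ici.1 hy)]) (mem_Ici.2 le_rfl) (mem_Ici.2 hx) hx
  norm_num at this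
  linarith

lemma sin_le_quintic {x : ℝ} (hx : 0 ≤ x) : sin x ≤ x - x ^ 3 / 6 + x ^ 5 / 120 := by
  have hd : ∀ x, HasDerivAt (fun x : ℝ => x - x ^ 3 / 6 + x ^ 5 / 120 - sin x)
      (1 - x ^ 2 / 2 + x ^ 4 / 24 - cos x) x := fun x =>
    ((((hasDerivAt_id x).sub ((hasDerivAt_pow 3 x).div_const 6)).add
      ((hasDerivAt_pow 5 x).div_const 120)).sub (hasDerivAt_sin x)).congr_deriv (by
        push_cast; ring)
  have := monotoneOn_of_hasDerivAt_nonneg (convex_Ici 0) hd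
    (fun y hy => by linarith [cos_le_quartic (mem_Ici.1 hy)]) (mem_Ici.2 le_rfl) (mem_Ici.2 hx) hx
  norm_num at this
  linarith

lemma besselJ_self (n : ℤ) : besselJ n n = (1 / π) * ∫ θ in (0:ℝ)..π, cos (n * (θ - sin θ)) := by
  simp only [besselJ]
  congr 2
  ext θ
  rw [← cos_neg]; congr 1; ring

lemma hasDerivAt_mul_sub_sin (ν θ : ℝ) :
    HasDerivAt (fun θ : ℝ => ν * (θ - sin θ)) (ν * (1 - cos θ)) θ :=
  ((hasDerivAt_id θ).sub (hasDerivAt_sin θ)).const_mul ν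

/-- The boundary term of two integrations by parts of `cos (ν (θ - sin θ))`. -/
noncomputable def phaseBoundary (s ν θ : ℝ) : ℝ :=
  sin (ν * (θ - sin θ)) / (ν * (1 - cos θ)) -
    (s + cos (ν * (θ - sin θ))) * sin θ / (ν ^ 2 * (1 - cos θ) ^ 3)

lemma hasDerivAt_phaseBoundary (s : ℝ) {ν θ : ℝ} (hν : ν ≠ 0) (hθ : 1 - cos θ ≠ 0) :
    HasDerivAt (phaseBoundary s ν) (cos (ν * (θ - sin θ)) +
      (s + cos (ν * (θ - sin θ))) * (2 * cos θ + 3) / (ν ^ 2 * (1 - cos θ) ^ 3)) θ := by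
  have hv := hasDerivAt_mul_sub_sin ν θ
  have hf : HasDerivAt (fun θ : ℝ => 1 - cos θ) (sin θ) θ := by
    simpa using (hasDerivAt_cos θ).const_sub 1
  have h := (hv.sin.div (hf.const_mul ν) (mul_ne_zero hν hθ)).sub
    (((hv.cos.const_add s).mul (hasDerivAt_sin θ)).div ((hf.pow 3).const_mul (ν ^ 2))
      (mul_ne_zero (pow_ne_zero 2 hν) (pow_ne_zero 3 hθ)))
  refine h.congr_deriv ?_
  simp only [Pi.mul_apply, Pi.pow_apply]
  have hs : sin θ ^ 2 = (1 - cos θ) * (2 - (1 - cos θ)) := by rw [sin_sq]; ring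
  have hc : cos θ = 1 - (1 - cos θ) := by ring
  generalize cos (ν * (θ - sin θ)) = C
  generalize sin (ν * (θ - sin θ)) = S
  generalize 1 - cos θ = f at hs hc hθ ⊢
  rw [hc]
  field_simp
  push_cast
  ring_nf
  rw [hs]
  ring

lemma phaseBoundary_pi (s : ℝ) (n : ℤ) : phaseBoundary s n π = 0 := by
  simp [phaseBoundary, sin_int_mul_pi]

lemma one_sub_cos_pos {θ : ℝ} (h0 : 0 < θ) (hπ : θ ≤ π) : 0 < 1 - cos θ := by
  have := strictAntiOn_cos ⟨le_rfl, pi_pos.le⟩ ⟨h0.le, hπ⟩ h0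
  rw [cos_zero] at this
  linarith

lemma continuous_cos_phase (ν : ℝ) : Continuous fun θ : ℝ => cos (ν * (θ - sin θ)) := by fun_prop

lemma tail_le {n : ℤ} (hn : n ≠ 0) {b : ℝ} (h0 : 0 < b) (hπ : b ≤ π) :
    ∫ θ in b..π, cos (n * (θ - sin θ)) ≤ -phaseBoundary 1 n b := by
  have hn' : (n : ℝ) ≠ 0 := Int.cast_ne_zero.2 hn
  have hd : ∀ θ ∈ Icc b π, HasDerivAt (phaseBoundary 1 n) _ θ := fun θ hθ =>
    hasDerivAt_phaseBoundary 1 hn' (one_sub_cos_pos (h0.trans_le hθ.1) hθ.2).ne'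
  have := intervalIntegral.integral_le_sub_of_hasDeriv_right_of_le hπ
    (fun θ hθ => (hd θ hθ).continuousAt.continuousWithinAt)
    (fun θ hθ => (hd θ ⟨hθ.1.le, hθ.2.le⟩).hasDerivWithinAt)
    ((continuous_cos_phase n).integrableOn_Icc) (fun θ hθ => le_add_of_nonneg_right (by
      have := one_sub_cos_pos (h0.trans hθ.1) hθ.2.le
      have h1 : 0 ≤ 1 + cos (n * (θ - sin θ)) := by linarith [neg_one_le_cos (n * (θ - sin θ))]
      have h2 : 0 ≤ 2 * cos θ + 3 := by linarith [neg_one_le_cos θ]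
      positivity))
  rwa [phaseBoundary_pi, zero_sub] at this

lemma le_tail {n : ℤ} (hn : n ≠ 0) {b : ℝ} (h0 : 0 < b) (hπ : b ≤ π) :
    -phaseBoundary (-1) n b ≤ ∫ θ in b..π, cos (n * (θ - sin θ)) := by
  have hn' : (n : ℝ) ≠ 0 := Int.cast_ne_zero.2 hn
  have hd : ∀ θ ∈ Icc b π, HasDerivAt (phaseBoundary (-1) n) _ θ := fun θ hθ =>
    hasDerivAt_phaseBoundary (-1) hn' (one_sub_cos_pos (h0.trans_le hθ.1) hθ.2).ne'
  have := intervalIntegral.sub_le_integral_of_hasDeriv_right_of_le hπ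
    (fun θ hθ => (hd θ hθ).continuousAt.continuousWithinAt)
    (fun θ hθ => (hd θ ⟨hθ.1.le, hθ.2.le⟩).hasDerivWithinAt)
    ((continuous_cos_phase n).integrableOn_Icc) (fun θ hθ => by
      have := one_sub_cos_pos (h0.trans hθ.1) hθ.2.le
      refine add_le_of_nonpos_right (div_nonpos_of_nonpos_of_nonneg
        (mul_nonpos_of_nonpos_of_nonneg ?_ ?_) (by positivity))
      · linarith [cos_le_one (n * (θ - sin θ))]
      · linarith [neg_one_le_cos θ])
  rwa [phaseBoundary_pi, zero_sub] at this

section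

variable {n : ℤ} {r : ℝ}

lemma phase_le (hr : r ^ 3 = n) (h0 : 0 ≤ r) {θ : ℝ} (hθ : 0 ≤ θ) :
    n * (θ - sin θ) ≤ (r * θ) ^ 3 / 6 := by
  have := mul_le_mul_of_nonneg_left (sin_ge_sub_cube hθ) (pow_nonneg h0 3)
  rw [← hr]; linarith

lemma le_phase (hr : r ^ 3 = n) (h0 : 0 ≤ r) (h2 : 1.58 ≤ r ^ 2) {θ : ℝ} (hθ : 0 ≤ θ) :
    (r * θ) ^ 3 / 6 - (r * θ) ^ 5 / 189 ≤ n * (θ - sin θ) := by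
  have h1 := mul_le_mul_of_nonneg_left (sin_le_quintic hθ) (pow_nonneg h0 3)
  have h3 : 0 ≤ r ^ 3 * θ ^ 5 * (r ^ 2 - 1.58) := by
    have := sub_nonneg.2 h2
    positivity
  have h4 : 0 ≤ r ^ 3 * θ ^ 5 := by positivity
  rw [← hr]; nlinarith

/-- An antiderivative of `1 - P² / 2 + P⁴ / 24`, where `P = x³ / 6 - x⁵ / 189`. -/
noncomputable def cosPhaseMajorant (x : ℝ) : ℝ :=
  x - (x ^ 7 / 252 - x ^ 9 / 5103 + x ^ 11 / 392931) / 2 +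
    (x ^ 13 / 16848 - x ^ 15 / 153090 + x ^ 17 / 3643542 - 2 * x ^ 19 / 384822333 +
      x ^ 21 / 26795786661) / 24

lemma hasDerivAt_cosPhaseMajorant (x : ℝ) : HasDerivAt cosPhaseMajorant
    (1 - (x ^ 3 / 6 - x ^ 5 / 189) ^ 2 / 2 + (x ^ 3 / 6 - x ^ 5 / 189) ^ 4 / 24) x := by
  have hd (k : ℕ) (c : ℝ) := (hasDerivAt_pow k x).div_const c
  refine (((hasDerivAt_id x).sub ((((hd 7 252).sub (hd 9 5103)).add (hd 11 392931)).div_const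
    2)).add ((((((hd 13 16848).sub (hd 15 153090)).add (hd 17 3643542)).sub
      (((hasDerivAt_pow 19 x).const_mul 2).div_const 384822333)).add
        (hd 21 26795786661)).div_const 24)).congr_deriv ?_
  norm_num
  ring

lemma cosPhaseMajorant_le : cosPhaseMajorant 2.6 ≤ 1.763 := by
  norm_num [cosPhaseMajorant]

lemma integral_cos_phase_le (hr : r ^ 3 = n) (h0 : 0 < r) (h2 : 1.58 ≤ r ^ 2) :
    ∫ θ in (0:ℝ)..2.6 / r, cos (n * (θ - sin θ)) ≤ 1.763 / r := by
  have hd : ∀ θ, HasDerivAt (fun θ => cosPhaseMajorant (r * θ) / r) _ θ := fun θ =>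
    ((hasDerivAt_cosPhaseMajorant (r * θ)).comp θ ((hasDerivAt_id θ).const_mul r)).div_const r
  have := intervalIntegral.integral_le_sub_of_hasDeriv_right_of_le
    (show (0:ℝ) ≤ 2.6 / r by positivity) (fun θ _ => (hd θ).continuousAt.continuousWithinAt)
    (fun θ _ => (hd θ).hasDerivWithinAt) ((continuous_cos_phase n).integrableOn_Icc)
    (fun θ hθ => ?_)
  · refine this.trans ?_
    rw [mul_div_cancel₀ _ h0.ne', mul_zero, show cosPhaseMajorant 0 = 0 by simp [cosPhaseMajorant],
      zero_div, sub_zero]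
    gcongr
    exact cosPhaseMajorant_le
  · have hx0 : 0 ≤ r * θ := mul_nonneg h0.le hθ.1.le
    have hx1 : r * θ ≤ 2.6 := by rw [mul_comm, ← le_div_iff₀ h0]; exact hθ.2.le
    have hle := phase_le hr h0.le hθ.1.le
    have hge := le_phase hr h0.le h2 hθ.1.le
    rw [mul_one, mul_div_cancel_right₀ _ h0.ne']
    set x := r * θ
    have hP : 0 ≤ x ^ 3 / 6 - x ^ 5 / 189 := by
      have h1 : x ^ 2 ≤ 2.6 ^ 2 := by gcongr
      have h2 : 0 ≤ x ^ 3 * (31.5 - x ^ 2) := mul_nonneg (by positivity) (by linarith)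
      linarith
    have hx3 : x ^ 3 ≤ 2.6 ^ 3 := by gcongr
    refine (cos_le_cos_of_nonneg_of_le_pi hP (hle.trans ?_) hge).trans (cos_le_quartic hP)
    linarith [pi_gt_three]

lemma half_sq_mul_le {θ c : ℝ} (hθ : 0 ≤ θ) (hc : c ≤ 1 - θ ^ 2 / 12) :
    c * (θ ^ 2 / 2) ≤ 1 - cos θ := by
  have := mul_le_mul_of_nonneg_right hc (show 0 ≤ θ ^ 2 / 2 by positivity)
  linarith [cos_le_quartic hθ]

lemma besselJ_self_mul_le (hr : r ^ 3 = n) (h0 : 0 < r) (hn : 2 ≤ n) (h2 : 1.58 ≤ r ^ 2) :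
    besselJ n n * r ≤ 0.5612 := by
  have hr1 : 1.256 ≤ r := by nlinarith
  have hb0 : 0 < 2.6 / r := by positivity
  have hb1 : 2.6 / r ≤ 2.0701 := by rw [div_le_iff₀ h0]; linarith
  have hbr : r * (2.6 / r) = 2.6 := mul_div_cancel₀ _ h0.ne'
  have hle := phase_le hr h0.le hb0.le
  have hge := le_phase hr h0.le h2 hb0.le
  have hhead := integral_cos_phase_le hr h0 h2
  have hbπ : 2.6 / r ≤ π := by linarith [pi_gt_three]
  have htail := tail_le (by omega : n ≠ 0) hb0 hbπ
  have hf := half_sq_mul_le (c := 0.64) hb0.le (by nlinarith)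
  have hfpos := one_sub_cos_pos hb0 hbπ
  have hbn : (n : ℝ) * (2.6 / r) ^ 3 = 2.6 ^ 3 := by rw [← hr, ← mul_pow, hbr]
  have hint := intervalIntegral.integral_add_adjacent_intervals
    ((continuous_cos_phase n).intervalIntegrable (μ := volume) 0 (2.6 / r))
    ((continuous_cos_phase n).intervalIntegrable (μ := volume) (2.6 / r) π)
  have hneg : 0 ≤ phaseBoundary 1 n (2.6 / r) := by
    rw [hbr] at hle hge
    simp only [phaseBoundary]
    generalize (2.6 / r) = b at *
    set v := (n : ℝ) * (b - sin b)
    have hπ := pi_gt_three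
    have hπ' := pi_lt_d2
    have hc : cos v ≤ 0 := cos_nonpos_of_pi_div_two_le_of_le (by norm_num at hge ⊢; linarith)
      (by norm_num at hle ⊢; linarith)
    have hs : 0 ≤ sin v := sin_nonneg_of_nonneg_of_le_pi (by norm_num at hge ⊢; linarith)
      (by norm_num at hle ⊢; linarith)
    have hsc : 1 + cos v ≤ sin v := by
      refine le_of_abs_le (abs_le_of_sq_le_sq ?_ hs)
      have := neg_one_le_cos v
      nlinarith [sin_sq_add_cos_sq v]
    have hn0 : (0 : ℝ) < n := by rw [← hr]; positivity
    have hnf : sin b ≤ n * (1 - cos b) ^ 2 := by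
      have h1 : (0.64 * (b ^ 2 / 2)) ^ 2 ≤ (1 - cos b) ^ 2 := by gcongr
      have h2 := mul_le_mul_of_nonneg_left h1 hn0.le
      have h3 : (n : ℝ) * (0.64 * (b ^ 2 / 2)) ^ 2 = 0.1024 * (n * b ^ 3) * b := by ring
      rw [h3, hbn] at h2
      linarith [sin_le hb0.le]
    rw [sub_nonneg, div_le_div_iff₀ (by positivity) (by positivity)]
    have hsb : 0 ≤ sin b := sin_nonneg_of_nonneg_of_le_pi hb0.le hbπ
    calc (1 + cos v) * sin b * (n * (1 - cos b)) ≤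
          sin v * (n * (1 - cos b) ^ 2) * (n * (1 - cos b)) := by gcongr
      _ = _ := by ring
  have hI : (∫ θ in (0:ℝ)..π, cos (n * (θ - sin θ))) * r ≤ 1.763 := by
    rw [← le_div_iff₀ h0]; linarith
  rw [besselJ_self, mul_assoc, one_div, inv_mul_le_iff₀ pi_pos]
  linarith [pi_gt_d4]

lemma besselJ_self_pos (hr : r ^ 3 = n) (h0 : 0 < r) (hn : 2 ≤ n) (h2 : 1.58 ≤ r ^ 2) :
    0 < besselJ n n := by
  have hr1 : 1.256 ≤ r := by nlinarith
  have hb0 : 0 < 1.5 / r := by positivity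
  have hb1 : 1.5 / r ≤ 1.2 := by rw [div_le_iff₀ h0]; linarith
  have hbr : r * (1.5 / r) = 1.5 := mul_div_cancel₀ _ h0.ne'
  have hbπ : 1.5 / r ≤ π := by linarith [pi_gt_three]
  have htail := le_tail (by omega : n ≠ 0) hb0 hbπ
  have hbn : (n : ℝ) * (1.5 / r) ^ 3 = 1.5 ^ 3 := by rw [← hr, ← mul_pow, hbr]
  have hf := half_sq_mul_le (c := 0.88) hb0.le (by nlinarith)
  have hfpos := one_sub_cos_pos hb0 hbπ
  have hint := intervalIntegral.integral_add_adjacent_intervals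
    ((continuous_cos_phase n).intervalIntegrable (μ := volume) 0 (1.5 / r))
    ((continuous_cos_phase n).intervalIntegrable (μ := volume) (1.5 / r) π)
  have hn0 : (0 : ℝ) < n := by rw [← hr]; positivity
  have hv : ∀ θ ∈ Icc 0 (1.5 / r), 0 ≤ (n : ℝ) * (θ - sin θ) ∧ (n : ℝ) * (θ - sin θ) ≤ 0.5625 := by
    refine fun θ hθ => ⟨mul_nonneg hn0.le (sub_nonneg.2 (sin_le hθ.1)),
      (phase_le hr h0.le hθ.1).trans ?_⟩
    have h1 : r * θ ≤ 1.5 := by rw [← hbr]; exact mul_le_mul_of_nonneg_left hθ.2 h0.le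
    have h3 : (r * θ) ^ 3 ≤ 1.5 ^ 3 := by
      have := mul_nonneg h0.le hθ.1
      gcongr
    linarith
  have hcos : ∀ θ ∈ Icc 0 (1.5 / r), 0.84 ≤ cos (n * (θ - sin θ)) := fun θ hθ => by
    have := one_sub_sq_div_two_le_cos (x := n * (θ - sin θ))
    nlinarith [hv θ hθ]
  have hhead : 1.5 / r * 0.84 ≤ ∫ θ in (0:ℝ)..1.5 / r, cos (n * (θ - sin θ)) := by
    have := intervalIntegral.integral_mono_on hb0.le (intervalIntegrable_const (c := (0.84 : ℝ)))
      ((continuous_cos_phase n).intervalIntegrable (μ := volume) 0 (1.5 / r)) hcos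
    simpa using this
  have hbdry : phaseBoundary (-1) n (1.5 / r) ≤ 0.6 * (1.5 / r) := by
    have hvb := hv _ ⟨hb0.le, le_rfl⟩
    have hcb := hcos _ ⟨hb0.le, le_rfl⟩
    simp only [phaseBoundary]
    generalize (1.5 / r) = b at *
    have hsv := sin_le hvb.1
    have h1 : sin (n * (b - sin b)) / (n * (1 - cos b)) ≤ 0.4 * b := by
      rw [div_le_iff₀ (by positivity)]
      have h2 := mul_le_mul_of_nonneg_left hf (mul_nonneg hn0.le hb0.le)
      have h3 : (n : ℝ) * b * (0.88 * (b ^ 2 / 2)) = 0.44 * (n * b ^ 3) := by ring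
      rw [h3, hbn] at h2
      linarith
    have h4 : (1 - cos (n * (b - sin b))) * sin b / (n ^ 2 * (1 - cos b) ^ 3) ≤ 0.2 * b := by
      rw [div_le_iff₀ (by positivity)]
      have h5 : (0.88 * (b ^ 2 / 2)) ^ 3 ≤ (1 - cos b) ^ 3 := by gcongr
      have h6 := mul_le_mul_of_nonneg_left h5 (sq_nonneg (n : ℝ))
      have h7 : (n : ℝ) ^ 2 * (0.88 * (b ^ 2 / 2)) ^ 3 = 0.085184 * (n * b ^ 3) ^ 2 := by ring
      rw [h7, hbn] at h6
      have h8 : (1 - cos (n * (b - sin b))) * sin b ≤ 0.16 * b :=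
        mul_le_mul (by linarith) (sin_le hb0.le)
          (sin_nonneg_of_nonneg_of_le_pi hb0.le hbπ) (by norm_num)
      have h9 := mul_le_mul_of_nonneg_left h6 (show 0 ≤ 0.2 * b by positivity)
      nlinarith
    have h10 : (-1 + cos (n * (b - sin b))) * sin b / (n ^ 2 * (1 - cos b) ^ 3) =
        -((1 - cos (n * (b - sin b))) * sin b / (n ^ 2 * (1 - cos b) ^ 3)) := by ring
    rw [h10]
    linarith
  rw [besselJ_self, ← hint]
  have := pi_pos
  have : 0 < (∫ θ in (0:ℝ)..1.5 / r, cos (n * (θ - sin θ))) +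
      ∫ θ in (1.5 / r)..π, cos (n * (θ - sin θ)) := by linarith
  positivity

end

lemma besselJ_one_one : besselJ 1 1 = (1 / π) * ∫ θ in (0:ℝ)..π, sin θ * sin (sin θ) := by
  have h1 : ∫ θ in (0:ℝ)..π, cos θ * cos (sin θ) = 0 := by
    have hd : ∀ θ ∈ uIcc (0:ℝ) π, HasDerivAt (fun θ => sin (sin θ)) (cos θ * cos (sin θ)) θ :=
      fun θ _ => (hasDerivAt_sin θ).sin.congr_deriv (mul_comm _ _)
    rw [intervalIntegral.integral_eq_sub_of_hasDerivAt hd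
      (Continuous.intervalIntegrable (by fun_prop) _ _)]
    simp
  have h2 : ∀ θ : ℝ, cos (1 * sin θ - (1 : ℤ) * θ) = cos θ * cos (sin θ) + sin θ * sin (sin θ) :=
    fun θ => by rw [Int.cast_one, one_mul, one_mul, cos_sub]; ring
  simp only [besselJ, h2]
  rw [intervalIntegral.integral_add (Continuous.intervalIntegrable (by fun_prop) _ _)
    (Continuous.intervalIntegrable (by fun_prop) _ _), h1, zero_add]

lemma besselJ_one_one_pos : 0 < besselJ 1 1 := by
  rw [besselJ_one_one]
  refine mul_pos (by have := pi_pos; positivity)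
    (intervalIntegral.intervalIntegral_pos_of_pos_on
      (Continuous.intervalIntegrable (by fun_prop) _ _) (fun θ hθ => ?_) pi_pos)
  have := sin_pos_of_mem_Ioo hθ
  exact mul_pos this (sin_pos_of_pos_of_lt_pi this (by linarith [sin_le_one θ, pi_gt_three]))

lemma besselJ_one_one_le : besselJ 1 1 ≤ 1 / 2 := by
  have : ∫ θ in (0:ℝ)..π, sin θ * sin (sin θ) ≤ ∫ θ in (0:ℝ)..π, sin θ ^ 2 := by
    refine intervalIntegral.integral_mono_on pi_pos.le
      (Continuous.intervalIntegrable (by fun_prop) _ _)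
      (Continuous.intervalIntegrable (by fun_prop) _ _) (fun θ hθ => ?_)
    have := sin_nonneg_of_mem_Icc hθ
    rw [sq]
    exact mul_le_mul_of_nonneg_left (sin_le this) this
  rw [besselJ_one_one, one_div, inv_mul_le_iff₀ pi_pos]
  rw [integral_sin_sq] at this
  simp at this
  linarith

/-! ### Uniform bounds -/

lemma riccati_exponent_le {ω d₀ K : ℝ} (hω : 0 < ω) (hd : 1 / (3 * ω) ≤ d₀) (hK : 1 / 2 ≤ K)
    (hcubic : ∀ s : ℝ, 0 ≤ s → s ≤ 1 → s - s ^ 2 / 2 + d₀ * (s - s ^ 3) ≤ K)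
    {τ : ℝ} (hτ : 0 ≤ τ) :
    (ω + ω ^ 2 / 2 + 1 / 3) * τ - ω ^ 2 / 4 * (exp (2 * τ) - 1) ≤ K := by
  have hexp : 1 + 2 * τ + 2 * τ ^ 2 + 4 / 3 * τ ^ 3 ≤ exp (2 * τ) := by
    have := sum_le_exp_of_nonneg (show 0 ≤ 2 * τ by positivity) 4
    norm_num [Finset.sum_range_succ, Nat.factorial] at this
    linarith
  have h1 := mul_le_mul_of_nonneg_left hexp (show 0 ≤ ω ^ 2 / 4 by positivity)
  have hs0 : 0 ≤ ω * τ := by positivity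
  have h2 : (ω + ω ^ 2 / 2 + 1 / 3) * τ - ω ^ 2 / 4 * (2 * τ + 2 * τ ^ 2 + 4 / 3 * τ ^ 3) =
      ω * τ - (ω * τ) ^ 2 / 2 + 1 / (3 * ω) * (ω * τ - (ω * τ) ^ 3) := by
    field_simp
    ring
  have hd0 : 0 ≤ 1 / (3 * ω) := by positivity
  suffices ω * τ - (ω * τ) ^ 2 / 2 + 1 / (3 * ω) * (ω * τ - (ω * τ) ^ 3) ≤ K by linarith
  generalize ω * τ = s at hs0
  generalize 1 / (3 * ω) = d at hd hd0
  rcases le_total s 1 with hs | hs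
  · have h3 : 0 ≤ s - s ^ 3 := by nlinarith [mul_nonneg hs0 (sub_nonneg.2 hs)]
    linarith [hcubic s hs0 hs, mul_le_mul_of_nonneg_right hd h3]
  · have h3 : s - s ^ 3 ≤ 0 := by
      nlinarith [mul_nonneg (mul_nonneg hs0 (sub_nonneg.2 hs)) (show 0 ≤ s + 1 by linarith)]
    nlinarith [mul_nonpos_of_nonneg_of_nonpos hd0 h3]

lemma exists_cube_add_sq_eq {ν lo : ℝ} (hlo : 0 ≤ lo) (hle : lo ≤ ν) (h : lo ^ 3 + lo ^ 2 ≤ ν ^ 2) :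
    ∃ ω, lo ≤ ω ∧ ω ^ 3 + ω ^ 2 = ν ^ 2 := by
  obtain ⟨ω, hω, heq⟩ := intermediate_value_Icc (f := fun x : ℝ => x ^ 3 + x ^ 2) hle
    (by fun_prop) ⟨h, by have := pow_nonneg (hlo.trans hle) 3; simpa using this⟩
  exact ⟨ω, hω.1, heq⟩

/-- The bound follows from an estimate at the turning point and one for the growth past it. -/
lemma abs_besselJ_le_of_growth {n : ℤ} {ω r K : ℝ} (hn : 1 ≤ n) (hr : r ^ 3 = n) (h0 : 0 < r)
    (hpos : 0 < besselJ n n) (hω : 0 ≤ ω) (hων : ω ^ 3 + ω ^ 2 = (n : ℝ) ^ 2) (hK0 : 0 ≤ K)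
    (hK : ∀ τ : ℝ, 0 ≤ τ → (ω + ω ^ 2 / 2 + 1 / 3) * τ - ω ^ 2 / 4 * (exp (2 * τ) - 1) ≤ K)
    (hJ : besselJ n n * r * exp K ≤ 1) {t : ℝ} (ht : 0 < t) :
    |besselJ n t| ≤ min ((n : ℝ) ^ (-(1 / 3) : ℝ)) (t ^ (-(1 / 3) : ℝ)) := by
  have hn1 : (1 : ℝ) ≤ n := by exact_mod_cast hn
  have hn0 : (0 : ℝ) < n := by linarith
  have hL := isLogBessel_besselJ hn hpos
  have hnr : (n : ℝ) ^ (-(1 / 3) : ℝ) = r⁻¹ := by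
    rw [← hr, ← rpow_natCast, ← rpow_mul h0.le]
    norm_num [rpow_neg_one]
  have htτ : (n : ℝ) * exp (log (t / n)) = t := by
    rw [exp_log (by positivity)]; field_simp
  rcases le_total t n with h | h
  · have h1 := hL.abs_le (log_nonpos (by positivity) ((div_le_one hn0).2 h))
    simp only [htτ, exp_zero, mul_one] at h1
    rw [min_eq_left (rpow_le_rpow_of_nonpos ht h (by norm_num)), hnr]
    refine h1.trans ?_
    rw [← one_div, le_div_iff₀ h0]
    exact (le_mul_of_one_le_right (by positivity) (one_le_exp hK0)).trans hJ
  · have h1 := hL.exp_mul_abs_le hn1 hω hων hK (log_nonneg ((one_le_div hn0).2 h))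
    simp only [htτ, exp_zero, mul_one] at h1
    have ht3 : t ^ (-(1 / 3) : ℝ) = (r * exp (log (t / n) / 3))⁻¹ := by
      conv_lhs => rw [← htτ]
      rw [mul_rpow hn0.le (exp_pos _).le, hnr, ← exp_mul, mul_inv, ← exp_neg]
      congr 2; ring
    rw [min_eq_right (rpow_le_rpow_of_nonpos hn0 h (by norm_num)), ht3, ← one_div,
      le_div_iff₀ (by positivity)]
    have := mul_le_mul_of_nonneg_left h1 h0.le
    linarith

lemma exp_le_of_pow_le {a : ℝ} {k m : ℕ} {C : ℝ} (hC : 0 ≤ C) (hk : k ≠ 0) (ha : a * k = m)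
    (h : 2.7182818286 ^ m ≤ C ^ k) : exp a ≤ C := by
  refine le_of_pow_le_pow_left₀ hk hC (le_trans ?_ h)
  rw [← exp_nat_mul, mul_comm, ha, ← exp_one_pow]
  gcongr
  exact exp_one_lt_d9.le

lemma abs_besselJ_le_of_pos {n : ℤ} (hn : 1 ≤ n) {t : ℝ} (ht : 0 < t) :
    |besselJ n t| ≤ min ((n : ℝ) ^ (-(1 / 3) : ℝ)) (t ^ (-(1 / 3) : ℝ)) := by
  rcases hn.eq_or_lt with rfl | hn2
  · obtain ⟨ω, hω, hων⟩ := exists_cube_add_sq_eq (ν := 1) (lo := 0.75) (by norm_num) (by norm_num)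
      (by norm_num)
    have hω0 : 0 < ω := by linarith
    refine abs_besselJ_le_of_growth (ω := ω) (r := 1) (K := 0.64) le_rfl (by norm_num) one_pos
      (by simpa using besselJ_one_one_pos) hω0.le (by simpa using hων) (by norm_num)
      (fun τ => riccati_exponent_le (d₀ := 4 / 9) hω0 ?_ (by norm_num) (fun s h0 h1 => ?_)) ?_ ht
    · rw [div_le_div_iff₀ (by positivity) (by norm_num)]; linarith
    · nlinarith [mul_nonneg h0 (sq_nonneg (s - 0.75)), sq_nonneg (s - 0.75)]
    · have := exp_le_of_pow_le (a := 0.64) (k := 25) (m := 16) (C := 2) (by norm_num) (by norm_num)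
        (by norm_num) (by norm_num)
      have h2 := mul_le_mul besselJ_one_one_le this (exp_pos _).le (by norm_num)
      simpa using h2
  · have hn2' : (2 : ℝ) ≤ n := by exact_mod_cast hn2
    have hn0 : (0 : ℝ) < n := by linarith
    obtain ⟨ω, hω, hων⟩ := exists_cube_add_sq_eq (ν := n) (lo := 1.3) (by norm_num) (by linarith)
      (by nlinarith)
    have hω0 : 0 < ω := by linarith
    have hr0 : 0 < (n : ℝ) ^ (1 / 3 : ℝ) := by positivity
    have hr : ((n : ℝ) ^ (1 / 3 : ℝ)) ^ 3 = n := by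
      rw [← rpow_natCast, ← rpow_mul hn0.le]; norm_num
    have hr2 : 1.58 ≤ ((n : ℝ) ^ (1 / 3 : ℝ)) ^ 2 := by
      have : 1.2588 ≤ (n : ℝ) ^ (1 / 3 : ℝ) :=
        le_of_pow_le_pow_left₀ three_ne_zero hr0.le (by rw [hr]; norm_num; linarith)
      nlinarith
    refine abs_besselJ_le_of_growth (K := 0.56) hn hr hr0 (besselJ_self_pos hr hr0 hn2 hr2)
      hω0.le hων (by norm_num)
      (fun τ => riccati_exponent_le (d₀ := 10 / 39) hω0 ?_ (by norm_num) (fun s h0 h1 => ?_)) ?_ ht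
    · rw [div_le_div_iff₀ (by positivity) (by norm_num)]; linarith
    · nlinarith [mul_nonneg h0 (sq_nonneg (s - 0.81)), sq_nonneg (s - 0.81)]
    · have := exp_le_of_pow_le (a := 0.56) (k := 25) (m := 14) (C := 1.77) (by norm_num)
        (by norm_num) (by norm_num) (by norm_num)
      have h2 := mul_le_mul (besselJ_self_mul_le hr hr0 hn2 hr2) this (exp_pos _).le (by norm_num)
      linarith

end LandauBessel

theorem stmt14 (n : ℤ) (t : ℝ) (hn : n ≠ 0) (ht : t ≠ 0) :
    |besselJ n t| ≤ min (|(n : ℝ)| ^ (-(1/3) : ℝ)) (|t| ^ (-(1/3) : ℝ)) := by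
  rw [LandauBessel.abs_besselJ_abs, ← Int.cast_abs]
  exact LandauBessel.abs_besselJ_le_of_pos (Int.one_le_abs hn) (abs_pos.2 ht)
end
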